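/- For every smooth function ψ : ℝ³ → ℂ⁴ and every k ∈ {1,2,3}, the total angular momentum operator J_k = L_k + (1/2)Σ_k commutes with Dirac's operator K: J_k(Kψ) = K(J_kψ). -/

import Mathlib

noncomputable section

open Matrix

/-- Physical space ℝ³. -/
abbrev E3 := EuclideanSpace ℝ (Fin 3)

/-- The Pauli matrices σ₁, σ₂, σ₃ (indexed by `Fin 3`, with `pauli 0 = σ₁`, etc.). -/
def pauli : Fin 3 → Matrix (Fin 2) (Fin 2) ℂ
  | 0 => !![0, 1; 1, 0]
  | 1 => !![0, -Complex.I; Complex.I, 0]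
  | 2 => !![1, 0; 0, -1]

/-- The 4×4 block matrix `[[A, B], [C, D]]` built from 2×2 blocks. -/
def qblock (A B C D : Matrix (Fin 2) (Fin 2) ℂ) : Matrix (Fin 4) (Fin 4) ℂ :=
  Matrix.reindex finSumFinEquiv finSumFinEquiv (Matrix.fromBlocks A B C D)

/-- The Dirac matrix `β = γ⁰ = [[I₂,0],[0,−I₂]]`. -/
def betaM : Matrix (Fin 4) (Fin 4) ℂ := qblock 1 0 0 (-1)

/-- The spin matrices `Σⱼ = [[σⱼ,0],[0,σⱼ]]` for j = 1,2,3. -/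
def SigM (j : Fin 3) : Matrix (Fin 4) (Fin 4) ℂ := qblock (pauli j) 0 0 (pauli j)

/-- The partial derivative `∂ⱼψ` of a ℂ⁴-valued function on ℝ³. -/
def pd (j : Fin 3) (ψ : E3 → Fin 4 → ℂ) : E3 → Fin 4 → ℂ :=
  fun x => fderiv ℝ ψ x (EuclideanSpace.single j 1)

/-- The orbital angular momentum operator `Lⱼψ = −i (x × ∇ψ)ⱼ` (cyclic indices in `Fin 3`). -/
def Lop (j : Fin 3) (ψ : E3 → Fin 4 → ℂ) : E3 → Fin 4 → ℂ :=
  fun x => (-Complex.I) • (x (j + 1) • pd (j + 2) ψ x - x (j + 2) • pd (j + 1) ψ x)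

/-- The operator `L²ψ = Σⱼ Lⱼ(Lⱼψ)`. -/
def L2op (ψ : E3 → Fin 4 → ℂ) : E3 → Fin 4 → ℂ :=
  fun x => ∑ j, Lop j (Lop j ψ) x

/-- The operator `(Σ·L)ψ = Σⱼ Σⱼ(Lⱼψ)`. -/
def SigL (ψ : E3 → Fin 4 → ℂ) : E3 → Fin 4 → ℂ :=
  fun x => ∑ j, (SigM j).mulVec (Lop j ψ x)

/-- Dirac's operator `Kψ = β(ψ + (Σ·L)ψ)`. -/
def Kop (ψ : E3 → Fin 4 → ℂ) : E3 → Fin 4 → ℂ :=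
  fun x => betaM.mulVec (ψ x + SigL ψ x)


/-- The total angular momentum operators `Jₖψ = Lₖψ + (1/2)Σₖψ`. -/
def Jop (k : Fin 3) (ψ : E3 → Fin 4 → ℂ) : E3 → Fin 4 → ℂ :=
  fun x => Lop k ψ x + ((1 : ℂ) / 2) • (SigM k).mulVec (ψ x)

/-!
`Lⱼ` is `-i` times differentiation along the infinitesimal rotation `x ↦ eⱼ × x`, so the relations
`[Lⱼ, Lⱼ₊₁] = i Lⱼ₊₂` (indices mod 3) come from the Lie bracket of rotations, once second
derivatives commute. The matrices `½Σⱼ` satisfy the same relations, so in `[Jₖ, Σ·L]` the terms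
`Σⱼ [Lₖ, Lⱼ]` and `[½Σₖ, Σⱼ] Lⱼ` cancel in the sum over `j`. Since `β` commutes with every `Σⱼ`,
`Jₖ` commutes with `K = β(1 + Σ·L)`.
-/

theorem sum_fin_three_cyclic {M : Type*} [AddCommMonoid M] (f : Fin 3 → M) (k : Fin 3) :
    ∑ j, f j = f k + f (k + 1) + f (k + 2) := by
  rw [← Equiv.sum_comp (Equiv.addLeft k), Fin.sum_univ_three]
  simp

section SpinMatrices

theorem qblock_mul (A B C D A' B' C' D' : Matrix (Fin 2) (Fin 2) ℂ) :
    qblock A B C D * qblock A' B' C' D' =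
      qblock (A * A' + B * C') (A * B' + B * D') (C * A' + D * C') (C * B' + D * D') := by
  simp only [qblock, reindex_apply, submatrix_mul_equiv, fromBlocks_multiply]

theorem qblock_sub (A B C D A' B' C' D' : Matrix (Fin 2) (Fin 2) ℂ) :
    qblock A B C D - qblock A' B' C' D' = qblock (A - A') (B - B') (C - C') (D - D') := by
  simp only [qblock, sub_eq_add_neg, ← fromBlocks_add, ← fromBlocks_neg]
  rfl

theorem qblock_smul (c : ℂ) (A B C D : Matrix (Fin 2) (Fin 2) ℂ) :
    c • qblock A B C D = qblock (c • A) (c • B) (c • C) (c • D) := by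
  simp only [qblock, reindex_apply, ← fromBlocks_smul, submatrix_smul, Pi.smul_apply]

theorem pauli_commutator (j : Fin 3) :
    ⁅pauli j, pauli (j + 1)⁆ = (2 * Complex.I) • pauli (j + 2) := by
  rw [Ring.lie_def]
  fin_cases j <;> ext a b <;> fin_cases a <;> fin_cases b <;>
    simp [pauli] <;> ring_nf <;> simp

theorem SigM_commutator (j : Fin 3) :
    ⁅SigM j, SigM (j + 1)⁆ = (2 * Complex.I) • SigM (j + 2) := by
  simp only [SigM, qblock_smul, smul_zero, ← pauli_commutator, Ring.lie_def, qblock_mul,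
    qblock_sub, mul_zero, zero_mul, add_zero, zero_add, sub_zero]

theorem commute_betaM_SigM (j : Fin 3) : Commute betaM (SigM j) := by
  simp only [Commute, SemiconjBy, betaM, SigM, qblock_mul, one_mul, mul_one, neg_mul, mul_neg,
    mul_zero, zero_mul, add_zero, zero_add, neg_zero]

end SpinMatrices

section Calculus

variable {𝕜 E : Type*} [NontriviallyNormedField 𝕜] [NormedAddCommGroup E] [NormedSpace 𝕜 E]

theorem lieBracket_continuousLinearMap (A B : E →L[𝕜] E) (x : E) :
    VectorField.lieBracket 𝕜 A B x = ⁅B, A⁆ x := by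
  simp [VectorField.lieBracket, Ring.lie_def]

variable {R m n : Type*} [NormedCommRing R] [NormedAlgebra 𝕜 R] [Fintype n]

variable (𝕜) in
/-- Left multiplication of vectors by a matrix as a continuous `𝕜`-linear map; the field `𝕜` of
differentiation may be smaller than the ring `R` of entries. -/
def mulVecCLM (A : Matrix m n R) : (n → R) →L[𝕜] (m → R) where
  toLinearMap := A.mulVecLin.restrictScalars 𝕜
  cont := continuous_const.matrix_mulVec continuous_id

variable [Finite m] {f : E → n → R} {x : E}

theorem differentiableAt_mulVec (A : Matrix m n R) (hf : DifferentiableAt 𝕜 f x) :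
    DifferentiableAt 𝕜 (fun y => A *ᵥ f y) x := by
  have := Fintype.ofFinite m
  exact (mulVecCLM 𝕜 A).differentiableAt.comp x hf

theorem fderiv_mulVec_apply (A : Matrix m n R) (hf : DifferentiableAt 𝕜 f x) (v : E) :
    fderiv 𝕜 (fun y => A *ᵥ f y) x v = A *ᵥ fderiv 𝕜 f x v := by
  have := Fintype.ofFinite m
  exact DFunLike.congr_fun ((mulVecCLM 𝕜 A).hasFDerivAt.comp x hf.hasFDerivAt).fderiv v

end Calculus

section OrbitalAngularMomentum

/-- The infinitesimal rotation `x ↦ eⱼ × x` about the `j`-th coordinate axis, which generates the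
flow differentiated by `Lⱼ`. -/
def rotationGenerator (j : Fin 3) : E3 →L[ℝ] E3 :=
  (EuclideanSpace.proj (j + 1) : E3 →L[ℝ] ℝ).smulRight (EuclideanSpace.single (j + 2) 1) -
    (EuclideanSpace.proj (j + 2) : E3 →L[ℝ] ℝ).smulRight (EuclideanSpace.single (j + 1) 1)

theorem rotationGenerator_commutator (j : Fin 3) :
    ⁅rotationGenerator j, rotationGenerator (j + 1)⁆ = rotationGenerator (j + 2) := by
  ext x a
  fin_cases j <;> fin_cases a <;> simp [rotationGenerator, Ring.lie_def]

variable {ψ φ : E3 → Fin 4 → ℂ} {x : E3}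

theorem Lop_eq_fderiv_rotationGenerator (j : Fin 3) (ψ : E3 → Fin 4 → ℂ) :
    Lop j ψ = fun x => (-Complex.I) • fderiv ℝ ψ x (rotationGenerator j x) := by
  funext x
  simp [Lop, pd, rotationGenerator]

theorem Lop_add (hψ : DifferentiableAt ℝ ψ x) (hφ : DifferentiableAt ℝ φ x) (j : Fin 3) :
    Lop j (fun y => ψ y + φ y) x = Lop j ψ x + Lop j φ x := by
  simp only [Lop_eq_fderiv_rotationGenerator, fderiv_fun_add hψ hφ, _root_.add_apply, smul_add]

theorem Lop_sum {ι : Type*} {s : Finset ι} {f : ι → E3 → Fin 4 → ℂ}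
    (hf : ∀ i ∈ s, DifferentiableAt ℝ (f i) x) (j : Fin 3) :
    Lop j (fun y => ∑ i ∈ s, f i y) x = ∑ i ∈ s, Lop j (f i) x := by
  simp only [Lop_eq_fderiv_rotationGenerator, fderiv_fun_sum hf, _root_.sum_apply,
    Finset.smul_sum]

theorem Lop_mulVec (hψ : DifferentiableAt ℝ ψ x) (A : Matrix (Fin 4) (Fin 4) ℂ) (j : Fin 3) :
    Lop j (fun y => A *ᵥ ψ y) x = A *ᵥ Lop j ψ x := by
  simp only [Lop_eq_fderiv_rotationGenerator, fderiv_mulVec_apply A hψ, mulVec_smul]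

theorem differentiableAt_fderiv_rotationGenerator (hψ : ContDiffAt ℝ 2 ψ x) (j : Fin 3) :
    DifferentiableAt ℝ (fun y => fderiv ℝ ψ y (rotationGenerator j y)) x :=
  ((hψ.fderiv_right (m := 1) (by norm_num)).differentiableAt (by simp)).clm_apply
    (rotationGenerator j).differentiableAt

theorem differentiableAt_Lop (hψ : ContDiffAt ℝ 2 ψ x) (j : Fin 3) :
    DifferentiableAt ℝ (Lop j ψ) x := by
  rw [Lop_eq_fderiv_rotationGenerator]
  exact (differentiableAt_fderiv_rotationGenerator hψ j).fun_const_smul (-Complex.I)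

theorem Lop_Lop_sub_Lop_Lop (hψ : ContDiffAt ℝ 2 ψ x) (i j : Fin 3) :
    Lop i (Lop j ψ) x - Lop j (Lop i ψ) x =
      fderiv ℝ ψ x (⁅rotationGenerator i, rotationGenerator j⁆ x) := by
  have bracket := VectorField.fderiv_apply_lieBracket hψ (by simp)
    (rotationGenerator i).differentiableAt (rotationGenerator j).differentiableAt
  rw [lieBracket_continuousLinearMap] at bracket
  simp only [Lop_eq_fderiv_rotationGenerator, bracket,
    fderiv_fun_const_smul (differentiableAt_fderiv_rotationGenerator hψ _), _root_.smul_apply]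
  simp only [smul_smul, neg_mul_neg, Complex.I_mul_I]
  module

theorem Lop_commutator (hψ : ContDiffAt ℝ 2 ψ x) (j : Fin 3) :
    Lop j (Lop (j + 1) ψ) x - Lop (j + 1) (Lop j ψ) x = Complex.I • Lop (j + 2) ψ x := by
  rw [Lop_Lop_sub_Lop_Lop hψ, rotationGenerator_commutator, Lop_eq_fderiv_rotationGenerator]
  simp [smul_smul]

end OrbitalAngularMomentum

section TotalAngularMomentum

variable {ψ φ : E3 → Fin 4 → ℂ} {x : E3}

theorem Jop_add (hψ : DifferentiableAt ℝ ψ x) (hφ : DifferentiableAt ℝ φ x) (k : Fin 3) :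
    Jop k (fun y => ψ y + φ y) x = Jop k ψ x + Jop k φ x := by
  simp only [Jop, Lop_add hψ hφ, mulVec_add, smul_add]
  abel

theorem Jop_sum {ι : Type*} {s : Finset ι} {f : ι → E3 → Fin 4 → ℂ}
    (hf : ∀ i ∈ s, DifferentiableAt ℝ (f i) x) (k : Fin 3) :
    Jop k (fun y => ∑ i ∈ s, f i y) x = ∑ i ∈ s, Jop k (f i) x := by
  simp only [Jop, Lop_sum hf, mulVec_sum, Finset.smul_sum, Finset.sum_add_distrib]

theorem Jop_mulVec (hψ : DifferentiableAt ℝ ψ x) (A : Matrix (Fin 4) (Fin 4) ℂ) (k : Fin 3) :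
    Jop k (fun y => A *ᵥ ψ y) x = A *ᵥ Jop k ψ x + ((1 : ℂ) / 2) • ⁅SigM k, A⁆ *ᵥ ψ x := by
  simp only [Jop, Lop_mulVec hψ, Ring.lie_def, sub_mulVec, mulVec_add, mulVec_smul, mulVec_mulVec]
  module

theorem Jop_betaM_mulVec (hψ : DifferentiableAt ℝ ψ x) (k : Fin 3) :
    Jop k (fun y => betaM *ᵥ ψ y) x = betaM *ᵥ Jop k ψ x := by
  rw [Jop_mulVec hψ, (commute_betaM_SigM k).symm.lie_eq, zero_mulVec, smul_zero, add_zero]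

theorem Lop_Jop (hψ : ContDiffAt ℝ 2 ψ x) (j k : Fin 3) :
    Lop j (Jop k ψ) x = Jop k (Lop j ψ) x - (Lop k (Lop j ψ) x - Lop j (Lop k ψ) x) := by
  have hψ' : DifferentiableAt ℝ ψ x := hψ.differentiableAt (by simp)
  have spin : Lop j (Jop k ψ) x =
      Lop j (Lop k ψ) x + (((1 : ℂ) / 2) • SigM k) *ᵥ Lop j ψ x := by
    rw [← Lop_mulVec hψ', ← Lop_add (differentiableAt_Lop hψ k) (differentiableAt_mulVec _ hψ')]
    simp only [smul_mulVec]
    rfl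
  rw [spin, smul_mulVec, Jop]
  abel

theorem Jop_SigM_mulVec_Lop (hψ : ContDiffAt ℝ 2 ψ x) (j k : Fin 3) :
    Jop k (fun y => SigM j *ᵥ Lop j ψ y) x = SigM j *ᵥ Lop j (Jop k ψ) x +
      (SigM j *ᵥ (Lop k (Lop j ψ) x - Lop j (Lop k ψ) x) +
        ((1 : ℂ) / 2) • ⁅SigM k, SigM j⁆ *ᵥ Lop j ψ x) := by
  rw [Jop_mulVec (differentiableAt_Lop hψ j), Lop_Jop hψ, mulVec_sub]
  abel

theorem differentiableAt_SigM_mulVec_Lop (hψ : ContDiffAt ℝ 2 ψ x) (j : Fin 3) :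
    DifferentiableAt ℝ (fun y => SigM j *ᵥ Lop j ψ y) x :=
  differentiableAt_mulVec _ (differentiableAt_Lop hψ j)

theorem sum_spin_orbit_commutators_eq_zero (hψ : ContDiffAt ℝ 2 ψ x) (k : Fin 3) :
    ∑ j, (SigM j *ᵥ (Lop k (Lop j ψ) x - Lop j (Lop k ψ) x) +
      ((1 : ℂ) / 2) • ⁅SigM k, SigM j⁆ *ᵥ Lop j ψ x) = 0 := by
  have add_two_add_one : k + 2 + 1 = k := by decide +revert
  have add_two_add_two : k + 2 + 2 = k + 1 := by decide +revert
  have orbital : Lop k (Lop (k + 2) ψ) x - Lop (k + 2) (Lop k ψ) x =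
      -(Complex.I • Lop (k + 1) ψ x) := by
    simpa only [add_two_add_one, add_two_add_two, neg_sub] using
      congrArg Neg.neg (Lop_commutator hψ (k + 2))
  have spin : ⁅SigM k, SigM (k + 2)⁆ = -((2 * Complex.I) • SigM (k + 1)) := by
    simpa only [add_two_add_one, add_two_add_two, Ring.lie_def, neg_sub] using
      congrArg Neg.neg (SigM_commutator (k + 2))
  rw [sum_fin_three_cyclic _ k, Lop_commutator hψ, SigM_commutator, orbital, spin]
  simp only [Ring.lie_def, sub_self, mulVec_zero, zero_mulVec, smul_zero, mulVec_neg, neg_mulVec,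
    mulVec_smul, smul_mulVec]
  module

theorem Jop_SigL (hψ : ContDiffAt ℝ 2 ψ x) (k : Fin 3) :
    Jop k (SigL ψ) x = SigL (Jop k ψ) x := by
  calc Jop k (SigL ψ) x = ∑ j, Jop k (fun y => SigM j *ᵥ Lop j ψ y) x :=
        Jop_sum (fun j _ => differentiableAt_SigM_mulVec_Lop hψ j) k
    _ = SigL (Jop k ψ) x := by
        rw [Finset.sum_congr rfl fun j _ => Jop_SigM_mulVec_Lop hψ j k, Finset.sum_add_distrib,
          sum_spin_orbit_commutators_eq_zero hψ, add_zero, SigL]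

end TotalAngularMomentum

theorem Jop_comm_Kop_general {ψ : E3 → Fin 4 → ℂ} {x : E3} (hψ : ContDiffAt ℝ 2 ψ x)
    (k : Fin 3) : Jop k (Kop ψ) x = Kop (Jop k ψ) x := by
  have hψ' : DifferentiableAt ℝ ψ x := hψ.differentiableAt (by simp)
  have hSigL : DifferentiableAt ℝ (SigL ψ) x :=
    .fun_sum fun j _ => differentiableAt_SigM_mulVec_Lop hψ j
  calc Jop k (Kop ψ) x = betaM *ᵥ Jop k (fun y => ψ y + SigL ψ y) x :=
        Jop_betaM_mulVec (hψ'.fun_add hSigL) k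
    _ = betaM *ᵥ (Jop k ψ x + Jop k (SigL ψ) x) := by rw [Jop_add hψ' hSigL]
    _ = Kop (Jop k ψ) x := by rw [Jop_SigL hψ, Kop]

/-- For smooth `ψ : ℝ³ → ℂ⁴`, each total angular momentum operator
`Jₖ = Lₖ + (1/2)Σₖ` commutes with Dirac's operator `K`: `Jₖ(Kψ) = K(Jₖψ)`. -/
theorem Jop_comm_Kop (ψ : E3 → Fin 4 → ℂ) (hψ : ContDiff ℝ (⊤ : ℕ∞) ψ)
    (k : Fin 3) (x : E3) :
    Jop k (Kop ψ) x = Kop (Jop k ψ) x := by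
  exact Jop_comm_Kop_general (contDiff_infty.1 hψ 2).contDiffAt k

end
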